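/- Let X, Y, μ, ν, c, ε, φ₁, φ₂ (satisfying Assumption A) and partitions 𝒥_A, 𝒥_B of X be as in the parallel domain decomposition setting. Let Θ₀ be a weight rule that is continuous and strictly decreases the global objective E on every non-fixed point (i.e. Θ₀ satisfies the hypotheses of the convergence theorem for continuous weight rules), and let Θ be any weight rule that performs at least as well as Θ₀: for every plan π with E(π) < ∞ and every partition 𝒥 ∈ {𝒥_A, 𝒥_B}, if π̄ and π̄₀ denote the parallel updates of π using weights Θ((π_J)_J,(π̃_J)_J) and Θ₀((π_J)_J,(π̃_J)_J) respectively (with π_J := π|_{X_J×Y} and π̃_J := S_J(π)), then E(π̄) ≤ E(π̄₀). Then the parallel domain decomposition iterates generated with weight rule Θ, alternating the partitions 𝒥_A and 𝒥_B from any initial plan π⁰ with E(π⁰) < ∞, converge pointwise to the unique global minimizer of E. -/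

import Mathlib

open Filter Topology
open scoped Classical

noncomputable section

/-- `φ : ℝ → ℝ ∪ {+∞}` is an entropy function: lower semicontinuous, convex,
`dom(φ) ⊆ [0,∞)`, `dom(φ)\{0} ≠ ∅`, never taking the value `-∞`. -/
def IsEntropyFn (φ : ℝ → EReal) : Prop :=
  LowerSemicontinuous φ ∧
  (∀ x y a b : ℝ, 0 ≤ a → 0 ≤ b → a + b = 1 →
      φ (a * x + b * y) ≤ (a : EReal) * φ x + (b : EReal) * φ y) ∧
  (∀ x : ℝ, φ x ≠ ⊥) ∧
  (∀ x : ℝ, φ x < ⊤ → 0 ≤ x) ∧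
  (∃ x : ℝ, x ≠ 0 ∧ φ x < ⊤)

/-- The recession slope `φ'_∞ = lim_{x→∞} φ(x)/x`. -/
def recessionSlope (φ : ℝ → EReal) : EReal :=
  Filter.limsup (fun x : ℝ => φ x * ((x⁻¹ : ℝ) : EReal)) Filter.atTop

/-- The `φ`-divergence on a finite set `Z`:
`D_φ(ρ|σ) = ∑_{z : σ z > 0} σ z · φ(ρ z / σ z) + φ'_∞ · ∑_{z : σ z = 0} ρ z`. -/
def divergence {Z : Type*} [Fintype Z] (φ : ℝ → EReal) (ρ σ : Z → ℝ) : EReal :=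
  (∑ z, if 0 < σ z then (σ z : EReal) * φ (ρ z / σ z) else 0)
    + recessionSlope φ * ((∑ z, if σ z = 0 then ρ z else 0 : ℝ) : EReal)

/-- The convex conjugate `φ*(z) = sup_{x ∈ ℝ} (z·x − φ(x))`. -/
def conjFn (φ : ℝ → EReal) (z : ℝ) : EReal :=
  ⨆ x : ℝ, (((z * x : ℝ) : EReal) - φ x)

/-- Kullback–Leibler divergence on a finite set, with `0·log 0 = 0`:
`KL(ρ|σ) = ∑ z (ρ z log(ρ z/σ z) − ρ z + σ z)` if `ρ ≪ σ`, else `+∞`. -/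
def KLfin {Z : Type*} [Fintype Z] (ρ σ : Z → ℝ) : EReal :=
  if ∀ z, σ z = 0 → ρ z = 0 then
    ((∑ z, (ρ z * Real.log (ρ z / σ z) - ρ z + σ z) : ℝ) : EReal)
  else ⊤

/-- Assumption A: the entropy function `φ` is nonnegative, finite on `[0,∞)`,
and continuously differentiable on the interior `(0,∞)` of its domain. -/
def AssumptionA (φ : ℝ → EReal) : Prop :=
  IsEntropyFn φ ∧ (∀ x : ℝ, 0 ≤ φ x) ∧ (∀ x : ℝ, 0 ≤ x → φ x ≠ ⊤) ∧
  ContDiffOn ℝ 1 (fun s : ℝ => (φ s).toReal) (Set.Ioi (0 : ℝ))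

/-- Primal objective of the unbalanced (cell) problem with `Y`-submarginal `νm`:
`E_J(π|νm) = ⟨c, π⟩ + ε KL(π | μ⊗ν) + D_{φ₁}(P_X π | μ) + D_{φ₂}(P_Y π + νm | ν)`. -/
def EJfun {W Y : Type*} [Fintype W] [Fintype Y]
    (c : W → Y → ℝ) (ε : ℝ) (φ₁ φ₂ : ℝ → EReal)
    (μ : W → ℝ) (ν : Y → ℝ) (νm : Y → ℝ) (π : W → Y → ℝ) : EReal :=
  ((∑ x, ∑ y, c x y * π x y : ℝ) : EReal)
    + (ε : EReal) * KLfin (fun p : W × Y => π p.1 p.2) (fun p : W × Y => μ p.1 * ν p.2)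
    + divergence φ₁ (fun x => ∑ y, π x y) μ
    + divergence φ₂ (fun y => (∑ x, π x y) + νm y) ν

/-- Dual objective of the unbalanced (cell) problem with `Y`-submarginal `νm`. -/
def DJfun {W Y : Type*} [Fintype W] [Fintype Y]
    (c : W → Y → ℝ) (ε : ℝ) (φ₁ φ₂ : ℝ → EReal)
    (μ : W → ℝ) (ν : Y → ℝ) (νm : Y → ℝ) (α : W → ℝ) (β : Y → ℝ) : EReal :=
  ((ε * ∑ x, ∑ y, (1 - Real.exp ((α x + β y - c x y) / ε)) * (μ x * ν y) : ℝ) : EReal)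
    - (∑ x, (μ x : EReal) * conjFn φ₁ (-(α x)))
    - (∑ y, (ν y : EReal) * conjFn φ₂ (-(β y)))
    - ((∑ y, β y * νm y : ℝ) : EReal)

/-- The `Y`-submarginal `ν_{-J}` of the plan `π` outside the cell `J`:
`ν_{-J}(y) = ∑_{x ∉ J} π(x,y)`. -/
def outMarg {X Y : Type*} [Fintype X] (J : Set X) (π : X → Y → ℝ) : Y → ℝ :=
  fun y => ∑ x, (Jᶜ).indicator (fun x' => π x' y) x

/-- The global unbalanced objective
`E(π) = ⟨c, π⟩ + ε KL(π|μ⊗ν) + D_{φ₁}(P_X π|μ) + D_{φ₂}(P_Y π|ν)`. -/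
def Eglobal {X Y : Type*} [Fintype X] [Fintype Y]
    (c : X → Y → ℝ) (ε : ℝ) (φ₁ φ₂ : ℝ → EReal)
    (μ : X → ℝ) (ν : Y → ℝ) (π : X → Y → ℝ) : EReal :=
  EJfun c ε φ₁ φ₂ μ ν (fun _ => 0) π

/-- An indexed family `Js : Fin n → Set X` is a partition of `X` into nonempty
subsets. -/
def IsFinPartition {X : Type*} {n : ℕ} (Js : Fin n → Set X) : Prop :=
  (∀ i, (Js i).Nonempty) ∧ (⋃ i, Js i) = Set.univ ∧
    ∀ i j, i ≠ j → Disjoint (Js i) (Js j)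

/-- `update` implements one cell update: `update J π` agrees with `π` outside
`J × Y` and its restriction to `J × Y` is the (unique) minimizer of the cell
subproblem `E_J(·|ν_{-J})` with `ν_{-J}(y) = ∑_{x ∉ J} π(x,y)`. -/
def IsCellUpdate {X Y : Type*} [Fintype X] [Fintype Y]
    (c : X → Y → ℝ) (ε : ℝ) (φ₁ φ₂ : ℝ → EReal) (μ : X → ℝ) (ν : Y → ℝ)
    (update : Set X → (X → Y → ℝ) → (X → Y → ℝ)) : Prop :=
  ∀ (J : Set X) (π : X → Y → ℝ), (∀ x y, 0 ≤ π x y) →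
    (∀ x y, 0 ≤ update J π x y) ∧
    (∀ x, x ∉ J → ∀ y, update J π x y = π x y) ∧
    ∀ π' : ↥J → Y → ℝ, (∀ (j : J) (y : Y), 0 ≤ π' j y) →
      EJfun (fun (j : J) y => c j y) ε φ₁ φ₂ (fun (j : J) => μ j) ν (outMarg J π)
          (fun (j : J) y => update J π j y)
        ≤ EJfun (fun (j : J) y => c j y) ε φ₁ φ₂ (fun (j : J) => μ j) ν (outMarg J π) π'

/-- One sequential domain decomposition sweep: cycle through the cells of the
partition in their fixed order, updating the current plan after each cell. -/
def sweep {X Y : Type*} (update : Set X → (X → Y → ℝ) → (X → Y → ℝ))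
    {n : ℕ} (Js : Fin n → Set X) (π : X → Y → ℝ) : X → Y → ℝ :=
  (List.ofFn Js).foldl (fun p J => update J p) π

/-- The restriction of a plan to the cell `J × Y`, extended by zero. -/
def cellRestr {X Y : Type*} (J : Set X) (π : X → Y → ℝ) : X → Y → ℝ :=
  fun x y => J.indicator (fun x' => π x' y) x

/-- Convex combination `∑_J (1 − θ_J) π_J + θ_J π̃_J` of cell plans. -/
def combPlan {X Y : Type*} {n : ℕ}
    (πJ tπ : Fin n → X → Y → ℝ) (θ : Fin n → ℝ) : X → Y → ℝ :=
  fun x y => ∑ i, ((1 - θ i) * πJ i x y + θ i * tπ i x y)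

/-- `S i π` is the unique minimizer of the cell subproblem on cell `Js i`
with `Y`-submarginal `ν_{-J}(y) = ∑_{x ∉ Js i} π(x,y)`, extended by zero. -/
def IsSolveMap {X Y : Type*} [Fintype X] [Fintype Y]
    (c : X → Y → ℝ) (ε : ℝ) (φ₁ φ₂ : ℝ → EReal) (μ : X → ℝ) (ν : Y → ℝ)
    {n : ℕ} (Js : Fin n → Set X)
    (S : Fin n → (X → Y → ℝ) → (X → Y → ℝ)) : Prop :=
  ∀ (i : Fin n) (π : X → Y → ℝ), (∀ x y, 0 ≤ π x y) →
    (∀ x y, 0 ≤ S i π x y) ∧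
    (∀ x, x ∉ Js i → ∀ y, S i π x y = 0) ∧
    ∀ π' : ↥(Js i) → Y → ℝ, (∀ (j : Js i) (y : Y), 0 ≤ π' j y) →
      EJfun (fun (j : Js i) y => c j y) ε φ₁ φ₂ (fun (j : Js i) => μ j) ν
          (outMarg (Js i) π) (fun (j : Js i) y => S i π j y)
        ≤ EJfun (fun (j : Js i) y => c j y) ε φ₁ φ₂ (fun (j : Js i) => μ j) ν
          (outMarg (Js i) π) π'

/-- One parallel domain decomposition iteration with weight rule `Θ`: solve all
cell subproblems in parallel and take the convex combination of old and new cell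
plans with weights `Θ((π_J)_J, (π̃_J)_J)`. -/
def parUpdate {X Y : Type*} {n : ℕ} (Js : Fin n → Set X)
    (S : Fin n → (X → Y → ℝ) → (X → Y → ℝ))
    (Θ : (Fin n → X → Y → ℝ) → (Fin n → X → Y → ℝ) → Fin n → ℝ)
    (π : X → Y → ℝ) : X → Y → ℝ :=
  combPlan (fun i => cellRestr (Js i) π) (fun i => S i π)
    (Θ (fun i => cellRestr (Js i) π) (fun i => S i π))


/-- Real-valued regularity of an entropy function. -/
structure RA (f : ℝ → ℝ) : Prop where
  conv : ConvexOn ℝ (Set.Ici 0) f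
  cont : ContinuousOn f (Set.Ici 0)
  nonneg : ∀ x, 0 ≤ f x
  diff : ∀ x, 0 < x → DifferentiableAt ℝ f x

lemma coe_toReal_of_A {φ : ℝ → EReal} (h : AssumptionA φ) {x : ℝ} (hx : 0 ≤ x) :
    φ x = (((φ x).toReal : ℝ) : EReal) :=
  (EReal.coe_toReal (h.2.2.1 x hx) (h.1.2.2.1 x)).symm

lemma RA_of_A {φ : ℝ → EReal} (h : AssumptionA φ) : RA (fun s => (φ s).toReal) := by
  have hconv : ConvexOn ℝ (Set.Ici 0) (fun s => (φ s).toReal) := by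
    refine ⟨convex_Ici 0, ?_⟩
    intro x hx y hy a b ha hb hab
    have hx' : (0:ℝ) ≤ x := hx
    have hy' : (0:ℝ) ≤ y := hy
    have h0 : 0 ≤ a * x + b * y := by positivity
    have := h.1.2.1 x y a b ha hb hab
    rw [coe_toReal_of_A h hx', coe_toReal_of_A h hy', coe_toReal_of_A h h0] at this
    simp only [smul_eq_mul]
    exact_mod_cast this
  have hdiff : ∀ x, 0 < x → DifferentiableAt ℝ (fun s => (φ s).toReal) x := by
    intro x hx
    have := (h.2.2.2.differentiableOn (by norm_num)) x hx
    exact this.differentiableAt (Ioi_mem_nhds hx)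
  refine ⟨hconv, ?_, fun x => EReal.toReal_nonneg (h.2.1 x), hdiff⟩
  intro x hx
  rcases eq_or_lt_of_le (show (0:ℝ) ≤ x from hx) with rfl | hx
  · -- continuity at zero
    set f := fun s => (φ s).toReal with hf
    rw [ContinuousWithinAt, tendsto_order]
    constructor
    · intro a ha
      have hl := h.1.1 0 (a : EReal) (by
        show (a : EReal) < φ 0
        rw [coe_toReal_of_A h le_rfl]; exact_mod_cast ha)
      filter_upwards [mem_nhdsWithin_of_mem_nhds hl, self_mem_nhdsWithin] with t ht ht0
      have ht : (a : EReal) < φ t := ht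
      rw [coe_toReal_of_A h (show (0:ℝ) ≤ t from ht0)] at ht
      exact_mod_cast ht
    · intro a ha
      have h1 : Tendsto (fun t : ℝ => (1 - t) * f 0 + t * f 1) (𝓝[Set.Ici 0] 0) (𝓝 (f 0)) := by
        have : Continuous (fun t : ℝ => (1 - t) * f 0 + t * f 1) := by fun_prop
        have := (this.tendsto 0).mono_left (nhdsWithin_le_nhds (s := Set.Ici 0))
        simpa using this
      have h2 : ∀ᶠ t : ℝ in 𝓝[Set.Ici 0] 0, t < 1 :=
        mem_nhdsWithin_of_mem_nhds (Iio_mem_nhds one_pos)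
      filter_upwards [h1.eventually (gt_mem_nhds ha), h2, self_mem_nhdsWithin] with t ht h2 ht0
      have ht0' : (0:ℝ) ≤ t := ht0
      have := hconv.2 (Set.mem_Ici.2 le_rfl) (Set.mem_Ici.2 zero_le_one)
        (show (0:ℝ) ≤ 1 - t by linarith) ht0' (by ring)
      simp only [smul_eq_mul, mul_zero, mul_one, zero_add] at this
      exact lt_of_le_of_lt this ht
  · exact (hdiff x hx).continuousAt.continuousWithinAt

/-- The scalar KL integrand. -/
def hK (a t : ℝ) : ℝ := t * Real.log (t / a) - t + a

lemma hK_eq {a : ℝ} (ha : 0 < a) (t : ℝ) :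
    hK a t = a * ((t / a) * Real.log (t / a)) - t + a := by
  unfold hK
  have : a * ((t / a) * Real.log (t / a)) = t * Real.log (t / a) := by
    field_simp
  rw [this]

lemma hK_cont {a : ℝ} (ha : 0 < a) : Continuous (hK a) := by
  have : hK a = fun t => a * ((t / a) * Real.log (t / a)) - t + a := funext (hK_eq ha)
  rw [this]
  have h := Real.continuous_mul_log.comp (continuous_id.div_const a)
  have h' : Continuous fun t : ℝ => (t / a) * Real.log (t / a) := h
  fun_prop

lemma hK_diff {a : ℝ} (ha : 0 < a) {t : ℝ} (ht : 0 < t) : DifferentiableAt ℝ (hK a) t := by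
  unfold hK
  have : t / a ≠ 0 := (div_pos ht ha).ne'
  fun_prop (disch := assumption)

lemma hK_strict {a : ℝ} (ha : 0 < a) : StrictConvexOn ℝ (Set.Ici 0) (hK a) := by
  refine ⟨convex_Ici 0, ?_⟩
  intro x hx y hy hxy s t hs ht hst
  have hx' : (0:ℝ) ≤ x := hx
  have hy' : (0:ℝ) ≤ y := hy
  have := Real.strictConvexOn_mul_log.2 (x := x / a) (y := y / a) (div_nonneg hx' ha.le)
    (div_nonneg hy' ha.le) (by intro h; apply hxy; field_simp at h; exact h) hs ht hst
  simp only [smul_eq_mul] at this ⊢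
  rw [hK_eq ha, hK_eq ha, hK_eq ha]
  have e : s * (x / a) + t * (y / a) = (s * x + t * y) / a := by ring
  rw [e] at this
  have h2 := mul_lt_mul_of_pos_left this ha
  have h3 : a = s * a + t * a := by rw [← add_mul, hst, one_mul]
  nlinarith

lemma hK_lower {a : ℝ} (ha : 0 < a) {t : ℝ} (ht : 0 ≤ t) (s : ℝ) :
    s * t - a * (Real.exp s - 1) ≤ hK a t := by
  rcases eq_or_lt_of_le ht with rfl | ht
  · unfold hK
    have := Real.exp_pos s
    simp
    nlinarith
  · unfold hK
    have hp : 0 < t / (a * Real.exp s) := by positivity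
    have h1 := Real.one_sub_inv_le_log_of_pos hp
    have h2 : Real.log (t / (a * Real.exp s)) = Real.log (t / a) - s := by
      rw [← div_div, Real.log_div (by positivity) (by positivity), Real.log_exp]
    rw [h2, inv_div] at h1
    have h3 := mul_le_mul_of_nonneg_left h1 ht.le
    have h4 : t * (1 - a * Real.exp s / t) = t - a * Real.exp s := by field_simp
    rw [h4] at h3
    nlinarith

/-- The part of the objective without the entropy. -/
def GJ {W Y : Type*} [Fintype W] [Fintype Y]
    (c : W → Y → ℝ) (f₁ f₂ : ℝ → ℝ)
    (μ : W → ℝ) (ν : Y → ℝ) (νm : Y → ℝ) (π : W → Y → ℝ) : ℝ :=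
  (∑ x, ∑ y, c x y * π x y) + (∑ x, μ x * f₁ ((∑ y, π x y) / μ x))
    + ∑ y, ν y * f₂ (((∑ x, π x y) + νm y) / ν y)

/-- Real-valued objective. -/
def FJ {W Y : Type*} [Fintype W] [Fintype Y]
    (c : W → Y → ℝ) (ε : ℝ) (f₁ f₂ : ℝ → ℝ)
    (μ : W → ℝ) (ν : Y → ℝ) (νm : Y → ℝ) (π : W → Y → ℝ) : ℝ :=
  GJ c f₁ f₂ μ ν νm π + ε * ∑ x, ∑ y, hK (μ x * ν y) (π x y)

lemma coe_finset_sum' {ι : Type*} (s : Finset ι) (g : ι → ℝ) :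
    ((∑ i ∈ s, g i : ℝ) : EReal) = ∑ i ∈ s, (g i : EReal) := by
  induction s using Finset.induction_on with
  | empty => simp
  | insert a s ha ih => rw [Finset.sum_insert ha, Finset.sum_insert ha, EReal.coe_add, ih]

lemma divergence_eq {Z : Type*} [Fintype Z] {φ : ℝ → EReal} (h : AssumptionA φ) (ρ σ : Z → ℝ)
    (hρ : ∀ z, 0 ≤ ρ z) (hσ : ∀ z, 0 < σ z) :
    divergence φ ρ σ = ((∑ z, σ z * (φ (ρ z / σ z)).toReal : ℝ) : EReal) := by
  unfold divergence
  have h0 : (∑ z, if σ z = 0 then ρ z else 0) = 0 :=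
    Finset.sum_eq_zero fun z _ => by simp [(hσ z).ne']
  rw [h0, EReal.coe_zero, mul_zero, add_zero, coe_finset_sum']
  refine Finset.sum_congr rfl fun z _ => ?_
  rw [if_pos (hσ z), EReal.coe_mul, ← coe_toReal_of_A h (div_nonneg (hρ z) (hσ z).le)]

lemma EJ_eq {W Y : Type*} [Fintype W] [Fintype Y]
    (c : W → Y → ℝ) (ε : ℝ) {φ₁ φ₂ : ℝ → EReal} (h₁ : AssumptionA φ₁) (h₂ : AssumptionA φ₂)
    {μ : W → ℝ} {ν : Y → ℝ} (hμ : ∀ x, 0 < μ x) (hν : ∀ y, 0 < ν y) {νm : Y → ℝ}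
    (hm : ∀ y, 0 ≤ νm y) {π : W → Y → ℝ} (hπ : ∀ x y, 0 ≤ π x y) :
    EJfun c ε φ₁ φ₂ μ ν νm π =
      ((FJ c ε (fun s => (φ₁ s).toReal) (fun s => (φ₂ s).toReal) μ ν νm π : ℝ) : EReal) := by
  unfold EJfun FJ GJ KLfin
  rw [if_pos (fun z hz => absurd hz (mul_pos (hμ _) (hν _)).ne'),
    divergence_eq h₁ _ _ (fun x => Finset.sum_nonneg fun y _ => hπ x y) hμ,
    divergence_eq h₂ _ _ (fun y => add_nonneg (Finset.sum_nonneg fun x _ => hπ x y) (hm y)) hν,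
    ← EReal.coe_mul, ← EReal.coe_add, ← EReal.coe_add, ← EReal.coe_add, EReal.coe_eq_coe_iff,
    Fintype.sum_prod_type]
  unfold hK
  ring

/-- Nonnegative plans. -/
def NN (X Y : Type*) : Set (X → Y → ℝ) := {π | ∀ x y, 0 ≤ π x y}

lemma NN_convex (X Y : Type*) : Convex ℝ (NN X Y) := by
  intro p hp q hq a b ha hb _ x y
  exact add_nonneg (mul_nonneg ha (hp x y)) (mul_nonneg hb (hq x y))

lemma GJ_convex {X Y : Type*} [Fintype X] [Fintype Y]
    (c : X → Y → ℝ) {f₁ f₂ : ℝ → ℝ} (h₁ : RA f₁) (h₂ : RA f₂)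
    {μ : X → ℝ} {ν : Y → ℝ} (hμ : ∀ x, 0 < μ x) (hν : ∀ y, 0 < ν y) :
    ConvexOn ℝ (NN X Y) (GJ c f₁ f₂ μ ν (fun _ => 0)) := by
  refine ⟨NN_convex X Y, ?_⟩
  intro p hp q hq a b ha hb hab
  unfold GJ
  simp only [add_zero, smul_eq_mul, mul_add, Finset.mul_sum]
  have e1 : ∑ x, ∑ y, c x y * (a • p + b • q) x y
      = ∑ x, ∑ y, a * (c x y * p x y) + ∑ x, ∑ y, b * (c x y * q x y) := by
    rw [← Finset.sum_add_distrib]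
    refine Finset.sum_congr rfl fun x _ => ?_
    rw [← Finset.sum_add_distrib]
    refine Finset.sum_congr rfl fun y _ => ?_
    simp only [Pi.add_apply, Pi.smul_apply, smul_eq_mul]; ring
  have e2 : ∑ x, μ x * f₁ ((∑ y, (a • p + b • q) x y) / μ x)
      ≤ ∑ x, a * (μ x * f₁ ((∑ y, p x y) / μ x)) + ∑ x, b * (μ x * f₁ ((∑ y, q x y) / μ x)) := by
    rw [← Finset.sum_add_distrib]
    refine Finset.sum_le_sum fun x _ => ?_
    have hc := h₁.conv.2 (x := (∑ y, p x y) / μ x) (y := (∑ y, q x y) / μ x)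
      (div_nonneg (Finset.sum_nonneg fun y _ => hp x y) (hμ x).le)
      (div_nonneg (Finset.sum_nonneg fun y _ => hq x y) (hμ x).le) ha hb hab
    have e : (∑ y, (a • p + b • q) x y) / μ x
        = a • ((∑ y, p x y) / μ x) + b • ((∑ y, q x y) / μ x) := by
      simp only [Pi.add_apply, Pi.smul_apply, smul_eq_mul, Finset.sum_add_distrib,
        ← Finset.mul_sum]
      ring
    rw [e]
    have := mul_le_mul_of_nonneg_left hc (hμ x).le
    simp only [smul_eq_mul] at this ⊢
    linarith
  have e3 : ∑ y, ν y * f₂ ((∑ x, (a • p + b • q) x y) / ν y)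
      ≤ ∑ y, a * (ν y * f₂ ((∑ x, p x y) / ν y)) + ∑ y, b * (ν y * f₂ ((∑ x, q x y) / ν y)) := by
    rw [← Finset.sum_add_distrib]
    refine Finset.sum_le_sum fun y _ => ?_
    have hc := h₂.conv.2 (x := (∑ x, p x y) / ν y) (y := (∑ x, q x y) / ν y)
      (div_nonneg (Finset.sum_nonneg fun x _ => hp x y) (hν y).le)
      (div_nonneg (Finset.sum_nonneg fun x _ => hq x y) (hν y).le) ha hb hab
    have e : (∑ x, (a • p + b • q) x y) / ν y
        = a • ((∑ x, p x y) / ν y) + b • ((∑ x, q x y) / ν y) := by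
      simp only [Pi.add_apply, Pi.smul_apply, smul_eq_mul, Finset.sum_add_distrib,
        ← Finset.mul_sum]
      ring
    rw [e]
    have := mul_le_mul_of_nonneg_left hc (hν y).le
    simp only [smul_eq_mul] at this ⊢
    linarith
  linarith

lemma FJ_strict {X Y : Type*} [Fintype X] [Fintype Y]
    (c : X → Y → ℝ) {ε : ℝ} (hε : 0 < ε) {f₁ f₂ : ℝ → ℝ} (h₁ : RA f₁) (h₂ : RA f₂)
    {μ : X → ℝ} {ν : Y → ℝ} (hμ : ∀ x, 0 < μ x) (hν : ∀ y, 0 < ν y) :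
    StrictConvexOn ℝ (NN X Y) (FJ c ε f₁ f₂ μ ν (fun _ => 0)) := by
  refine (GJ_convex c h₁ h₂ hμ hν).add_strictConvexOn ⟨NN_convex X Y, ?_⟩
  intro p hp q hq hpq a b ha hb hab
  have hne : ∃ x y, p x y ≠ q x y := by
    by_contra hcon
    push Not at hcon
    exact hpq (funext fun x => funext fun y => hcon x y)
  obtain ⟨x0, y0, hxy⟩ := hne
  have key : ∑ z : X × Y, hK (μ z.1 * ν z.2) ((a • p + b • q) z.1 z.2)
      < ∑ z : X × Y, (a * hK (μ z.1 * ν z.2) (p z.1 z.2) + b * hK (μ z.1 * ν z.2) (q z.1 z.2)) := by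
    refine Finset.sum_lt_sum (fun z _ => ?_) ⟨(x0, y0), Finset.mem_univ _, ?_⟩
    · exact (hK_strict (mul_pos (hμ z.1) (hν z.2))).convexOn.2 (hp _ _) (hq _ _) ha.le hb.le hab
    · exact (hK_strict (mul_pos (hμ x0) (hν y0))).2 (hp _ _) (hq _ _) hxy ha hb hab
  rw [Finset.sum_add_distrib, ← Finset.mul_sum, ← Finset.mul_sum, Fintype.sum_prod_type,
    Fintype.sum_prod_type, Fintype.sum_prod_type] at key
  have := mul_lt_mul_of_pos_left key hε
  simp only [smul_eq_mul]
  linarith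

lemma FJ_contOn {X Y : Type*} [Fintype X] [Fintype Y]
    (c : X → Y → ℝ) (ε : ℝ) {f₁ f₂ : ℝ → ℝ} (h₁ : RA f₁) (h₂ : RA f₂)
    {μ : X → ℝ} {ν : Y → ℝ} (hμ : ∀ x, 0 < μ x) (hν : ∀ y, 0 < ν y) :
    ContinuousOn (FJ c ε f₁ f₂ μ ν (fun _ => 0)) (NN X Y) := by
  unfold FJ GJ
  refine ContinuousOn.add (ContinuousOn.add (ContinuousOn.add ?_ ?_) ?_) ?_
  · exact Continuous.continuousOn (by fun_prop)
  · refine continuousOn_finsetSum _ fun x _ => continuousOn_const.mul ?_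
    refine h₁.cont.comp (Continuous.continuousOn (by fun_prop)) fun p hp => ?_
    exact div_nonneg (Finset.sum_nonneg fun y _ => hp x y) (hμ x).le
  · refine continuousOn_finsetSum _ fun y _ => continuousOn_const.mul ?_
    refine h₂.cont.comp (Continuous.continuousOn (by fun_prop)) fun p hp => ?_
    exact div_nonneg (add_nonneg (Finset.sum_nonneg fun x _ => hp x y) le_rfl) (hν y).le
  · refine Continuous.continuousOn (continuous_const.mul ?_)
    refine continuous_finsetSum _ fun x _ => continuous_finsetSum _ fun y _ => ?_
    exact (hK_cont (mul_pos (hμ x) (hν y))).comp (by fun_prop)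

lemma FJ_diff {X Y : Type*} [Fintype X] [Fintype Y] [Nonempty X] [Nonempty Y]
    (c : X → Y → ℝ) (ε : ℝ) {f₁ f₂ : ℝ → ℝ} (h₁ : RA f₁) (h₂ : RA f₂)
    {μ : X → ℝ} {ν : Y → ℝ} (hμ : ∀ x, 0 < μ x) (hν : ∀ y, 0 < ν y)
    {p : X → Y → ℝ} (hp : ∀ x y, 0 < p x y) :
    DifferentiableAt ℝ (FJ c ε f₁ f₂ μ ν (fun _ => 0)) p := by
  unfold FJ GJ
  refine DifferentiableAt.add (DifferentiableAt.add (DifferentiableAt.add ?_ ?_) ?_) ?_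
  · fun_prop
  · refine DifferentiableAt.fun_sum fun x _ => DifferentiableAt.const_mul ?_ _
    refine DifferentiableAt.comp p (g := f₁) (f := fun p : X → Y → ℝ => (∑ y, p x y) / μ x)
      (h₁.diff _ ?_) (by fun_prop)
    exact div_pos (Finset.sum_pos (fun y _ => hp x y) Finset.univ_nonempty) (hμ x)
  · refine DifferentiableAt.fun_sum fun y _ => DifferentiableAt.const_mul ?_ _
    refine DifferentiableAt.comp p (g := f₂)
      (f := fun p : X → Y → ℝ => ((∑ x, p x y) + 0) / ν y) (h₂.diff _ ?_) (by fun_prop)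
    exact div_pos (by simpa using Finset.sum_pos (fun x _ => hp x y) Finset.univ_nonempty) (hν y)
  · refine DifferentiableAt.const_mul ?_ _
    refine DifferentiableAt.fun_sum fun x _ => DifferentiableAt.fun_sum fun y _ => ?_
    exact DifferentiableAt.comp p (g := hK (μ x * ν y)) (f := fun p : X → Y → ℝ => p x y)
      (hK_diff (mul_pos (hμ x) (hν y)) (hp x y)) (by fun_prop)

lemma FJ_coercive {X Y : Type*} [Fintype X] [Fintype Y]
    (c : X → Y → ℝ) {ε : ℝ} (hε : 0 < ε) {f₁ f₂ : ℝ → ℝ} (h₁ : RA f₁) (h₂ : RA f₂)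
    {μ : X → ℝ} {ν : Y → ℝ} (hμ : ∀ x, 0 < μ x) (hν : ∀ y, 0 < ν y) :
    ∃ C : ℝ, ∀ p ∈ NN X Y, ∀ x y, p x y ≤ FJ c ε f₁ f₂ μ ν (fun _ => 0) p + C := by
  refine ⟨∑ x, ∑ y, ε * (μ x * ν y * (Real.exp ((1 - c x y) / ε) - 1)), ?_⟩
  intro p hp x0 y0
  have h1 : p x0 y0 ≤ ∑ x, ∑ y, p x y :=
    (Finset.single_le_sum (f := fun y => p x0 y) (fun y _ => hp x0 y) (Finset.mem_univ y0)).trans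
      (Finset.single_le_sum (f := fun x => ∑ y, p x y)
        (fun x _ => Finset.sum_nonneg fun y _ => hp x y) (Finset.mem_univ x0))
  have h2 : ∑ x, ∑ y, p x y ≤ ∑ x, ∑ y, (c x y * p x y + ε * hK (μ x * ν y) (p x y)
      + ε * (μ x * ν y * (Real.exp ((1 - c x y) / ε) - 1))) := by
    refine Finset.sum_le_sum fun x _ => Finset.sum_le_sum fun y _ => ?_
    have := hK_lower (mul_pos (hμ x) (hν y)) (hp x y) ((1 - c x y) / ε)
    have := mul_le_mul_of_nonneg_left this hε.le
    have e : ε * ((1 - c x y) / ε * p x y) = (1 - c x y) * p x y := by field_simp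
    rw [mul_sub, e] at this
    linarith
  have h3 : 0 ≤ ∑ x, μ x * f₁ ((∑ y, p x y) / μ x) :=
    Finset.sum_nonneg fun x _ => mul_nonneg (hμ x).le (h₁.nonneg _)
  have h4 : 0 ≤ ∑ y, ν y * f₂ (((∑ x, p x y) + 0) / ν y) :=
    Finset.sum_nonneg fun y _ => mul_nonneg (hν y).le (h₂.nonneg _)
  unfold FJ GJ
  simp only [Finset.sum_add_distrib, ← Finset.mul_sum] at h2 ⊢
  linarith

lemma FJ_split {X Y : Type*} [Fintype X] [Fintype Y]
    (c : X → Y → ℝ) (ε : ℝ) (f₁ f₂ : ℝ → ℝ)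
    (μ : X → ℝ) (ν : Y → ℝ) (J : Set X) :
    ∃ R : (X → Y → ℝ) → ℝ, (∀ p q : X → Y → ℝ, (∀ x ∉ J, p x = q x) → R p = R q) ∧
      ∀ p : X → Y → ℝ, FJ c ε f₁ f₂ μ ν (fun _ => 0) p
        = FJ (fun (j : J) y => c j y) ε f₁ f₂ (fun (j : J) => μ j) ν (outMarg J p)
          (fun (j : J) y => p j y) + R p := by
  refine ⟨fun p => (∑ x : {x // x ∉ J}, ∑ y, c x y * p x y)
    + (∑ x : {x // x ∉ J}, μ x * f₁ ((∑ y, p x y) / μ x))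
    + ε * ∑ x : {x // x ∉ J}, ∑ y, hK (μ x * ν y) (p x y), ?_, ?_⟩
  · intro p q h
    have : ∀ x : {x // x ∉ J}, p x = q x := fun x => h x x.2
    simp only [this]
  · intro p
    have key : ∀ g : X → ℝ, ∑ x, g x = ∑ j : J, g j + ∑ x : {x // x ∉ J}, g x := fun g =>
      (Fintype.sum_subtype_add_sum_subtype (fun x => x ∈ J) g).symm
    have ho : ∀ y, ∑ x, p x y + 0 = ∑ j : J, p j y + outMarg J p y := by
      intro y
      rw [add_zero, key (fun x => p x y)]
      congr 1
      unfold outMarg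
      rw [key]
      simp only [Set.indicator_apply, Set.mem_compl_iff]
      have hz : (∑ x : J, if (x : X) ∉ J then p x y else 0) = 0 :=
        Finset.sum_eq_zero fun j _ => by simp
      rw [hz, zero_add]
      exact Finset.sum_congr rfl fun x _ => by simp [x.2]
    unfold FJ GJ
    simp only [ho]
    rw [key (fun x => ∑ y, c x y * p x y), key (fun x => μ x * f₁ ((∑ y, p x y) / μ x)),
      key (fun x => ∑ y, hK (μ x * ν y) (p x y))]
    ring

/-- Replace the plan `p` on the cell `J` by `s`. -/
def upd {X Y : Type*} (J : Set X) (s p : X → Y → ℝ) : X → Y → ℝ :=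
  fun x => if x ∈ J then s x else p x

lemma upd_NN {X Y : Type*} (J : Set X) {s p : X → Y → ℝ} (hs : s ∈ NN X Y) (hp : p ∈ NN X Y) :
    upd J s p ∈ NN X Y := by
  intro x y
  unfold upd
  split_ifs
  · exact hs x y
  · exact hp x y

lemma outMarg_nonneg {X Y : Type*} [Fintype X] (J : Set X) {p : X → Y → ℝ} (hp : p ∈ NN X Y)
    (y : Y) : 0 ≤ outMarg J p y :=
  Finset.sum_nonneg fun x _ => Set.indicator_nonneg (fun x' _ => hp x' y) x

lemma outMarg_congr {X Y : Type*} [Fintype X] (J : Set X) {p q : X → Y → ℝ}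
    (h : ∀ x ∉ J, q x = p x) : outMarg J q = outMarg J p := by
  funext y
  unfold outMarg
  refine Finset.sum_congr rfl fun x _ => ?_
  simp only [Set.indicator_apply, Set.mem_compl_iff]
  split_ifs with hx
  · rfl
  · rw [h x hx]

lemma solve_min {X Y : Type*} [Fintype X] [Fintype Y]
    {c : X → Y → ℝ} {ε : ℝ} {φ₁ φ₂ : ℝ → EReal} (h₁ : AssumptionA φ₁) (h₂ : AssumptionA φ₂)
    {μ : X → ℝ} {ν : Y → ℝ} (hμ : ∀ x, 0 < μ x) (hν : ∀ y, 0 < ν y)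
    {n : ℕ} {Js : Fin n → Set X} {S : Fin n → (X → Y → ℝ) → (X → Y → ℝ)}
    (hS : IsSolveMap c ε φ₁ φ₂ μ ν Js S) (i : Fin n) {p : X → Y → ℝ} (hp : p ∈ NN X Y)
    {q : X → Y → ℝ} (hq : q ∈ NN X Y) (hqp : ∀ x ∉ Js i, q x = p x) :
    FJ c ε (fun s => (φ₁ s).toReal) (fun s => (φ₂ s).toReal) μ ν (fun _ => 0)
        (upd (Js i) (S i p) p)
      ≤ FJ c ε (fun s => (φ₁ s).toReal) (fun s => (φ₂ s).toReal) μ ν (fun _ => 0) q := by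
  obtain ⟨R, hR, hsplit⟩ := FJ_split c ε (fun s => (φ₁ s).toReal) (fun s => (φ₂ s).toReal) μ ν (Js i)
  obtain ⟨hS0, -, hSm⟩ := hS i p hp
  have hu : ∀ x ∉ Js i, upd (Js i) (S i p) p x = p x := fun x hx => by simp [upd, hx]
  have hm := hSm (fun j y => q j y) (fun j y => hq j y)
  have hμJ : ∀ j : Js i, 0 < (fun (j : Js i) => μ j) j := fun j => hμ j
  rw [EJ_eq (π := fun (j : Js i) y => S i p j y) _ _ h₁ h₂ hμJ hν (outMarg_nonneg _ hp)
      (fun j y => hS0 j y),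
    EJ_eq (π := fun (j : Js i) y => q j y) _ _ h₁ h₂ hμJ hν (outMarg_nonneg _ hp)
      (fun j y => hq j y)] at hm
  have hm := EReal.coe_le_coe_iff.1 hm
  rw [hsplit, hsplit q, outMarg_congr _ hu, outMarg_congr _ hqp,
    hR (upd (Js i) (S i p) p) q (fun x hx => by rw [hu x hx, hqp x hx])]
  have e : (fun (j : Js i) y => upd (Js i) (S i p) p j y) = fun (j : Js i) y => S i p j y := by
    funext j y
    simp [upd]
  rw [e]
  linarith

lemma row_min_pos {X Y : Type*} [Fintype X] [Fintype Y]
    (c : X → Y → ℝ) {ε : ℝ} (hε : 0 < ε) {f₁ f₂ : ℝ → ℝ} (h₁ : RA f₁) (h₂ : RA f₂)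
    {μ : X → ℝ} {ν : Y → ℝ} (hμ : ∀ x, 0 < μ x) (hν : ∀ y, 0 < ν y)
    {p : X → Y → ℝ} (hp : p ∈ NN X Y)
    (H : ∀ x0, ∀ q ∈ NN X Y, (∀ x, x ≠ x0 → q x = p x) →
      FJ c ε f₁ f₂ μ ν (fun _ => 0) p ≤ FJ c ε f₁ f₂ μ ν (fun _ => 0) q) (x0 : X) (y0 : Y) :
    0 < p x0 y0 := by
  by_contra hcon
  have hz : p x0 y0 = 0 := le_antisymm (not_lt.1 hcon) (hp x0 y0)
  set e : X → Y → ℝ := fun x y => if x = x0 ∧ y = y0 then 1 else 0 with he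
  have he0 : e ∈ NN X Y := by
    intro x y; simp only [he]; split_ifs <;> norm_num
  set G := GJ c f₁ f₂ μ ν (fun _ => 0) with hG
  set a := μ x0 * ν y0 with ha
  have hapos : 0 < a := mul_pos (hμ _) (hν _)
  have hq0 : p + e ∈ NN X Y := fun x y => add_nonneg (hp x y) (he0 x y)
  have key : ∀ t : ℝ, 0 < t → t ≤ 1 → 0 ≤ (G (p + e) - G p) + ε * (Real.log (t / a) - 1) := by
    intro t ht ht1
    have hc := (GJ_convex c h₁ h₂ hμ hν).2 hp hq0 (show 0 ≤ 1 - t by linarith) ht.le (by ring)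
    have hpt : (1 - t) • p + t • (p + e) = p + t • e := by
      rw [smul_add, ← add_assoc, ← add_smul]; simp
    rw [hpt] at hc
    have hF := H x0 (p + t • e) (fun x y => add_nonneg (hp x y) (mul_nonneg ht.le (he0 x y)))
      (fun x hx => by funext y; simp [he, hx])
    unfold FJ at hF
    have hsum : ∑ x, ∑ y, hK (μ x * ν y) ((p + t • e) x y)
        = ∑ x, ∑ y, hK (μ x * ν y) (p x y) + (t * Real.log (t / a) - t) := by
      have : ∑ z : X × Y, hK (μ z.1 * ν z.2) ((p + t • e) z.1 z.2)
        = ∑ z : X × Y, (hK (μ z.1 * ν z.2) (p z.1 z.2)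
          + if z = (x0, y0) then (t * Real.log (t / a) - t) else 0) := by
        refine Finset.sum_congr rfl fun z _ => ?_
        obtain ⟨x, y⟩ := z
        by_cases hxy : x = x0 ∧ y = y0
        · obtain ⟨rfl, rfl⟩ := hxy
          simp [he, hz, hK, ha]
          ring
        · have : (x, y) ≠ (x0, y0) := by simpa [Prod.ext_iff] using hxy
          simp [he, hxy]
      rw [Finset.sum_add_distrib, Fintype.sum_prod_type, Fintype.sum_prod_type] at this
      rw [this]; simp
    rw [hsum] at hF
    simp only [smul_eq_mul] at hc
    have : 0 ≤ t * ((G (p + e) - G p) + ε * (Real.log (t / a) - 1)) := by nlinarith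
    exact nonneg_of_mul_nonneg_right this ht
  set D := G (p + e) - G p with hD
  set t := min 1 (a * Real.exp (-(D / ε))) with htdef
  have ht : 0 < t := lt_min one_pos (by positivity)
  have h := key t ht (min_le_left _ _)
  have hlog : Real.log (t / a) ≤ -(D / ε) := by
    rw [Real.log_le_iff_le_exp (by positivity), div_le_iff₀ hapos, mul_comm]
    exact min_le_right _ _
  have h5 : ε * Real.log (t / a) ≤ -D := by
    have := mul_le_mul_of_nonneg_left hlog hε.le
    have e1 : ε * -(D / ε) = -D := by field_simp
    linarith
  linarith

lemma row_min_global {X Y : Type*} [Fintype X] [Fintype Y] [Nonempty X] [Nonempty Y]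
    (c : X → Y → ℝ) {ε : ℝ} (hε : 0 < ε) {f₁ f₂ : ℝ → ℝ} (h₁ : RA f₁) (h₂ : RA f₂)
    {μ : X → ℝ} {ν : Y → ℝ} (hμ : ∀ x, 0 < μ x) (hν : ∀ y, 0 < ν y)
    {p : X → Y → ℝ} (hp : p ∈ NN X Y)
    (H : ∀ x0, ∀ q ∈ NN X Y, (∀ x, x ≠ x0 → q x = p x) →
      FJ c ε f₁ f₂ μ ν (fun _ => 0) p ≤ FJ c ε f₁ f₂ μ ν (fun _ => 0) q)
    {q : X → Y → ℝ} (hq : q ∈ NN X Y) :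
    FJ c ε f₁ f₂ μ ν (fun _ => 0) p ≤ FJ c ε f₁ f₂ μ ν (fun _ => 0) q := by
  have hpos := row_min_pos c hε h₁ h₂ hμ hν hp H
  have hd := (FJ_diff c ε h₁ h₂ hμ hν hpos).hasFDerivAt
  have hsc := (FJ_strict c hε h₁ h₂ hμ hν).convexOn
  set F := FJ c ε f₁ f₂ μ ν (fun _ => 0) with hF
  set L := fderiv ℝ F p with hL
  have hline : ∀ w : X → Y → ℝ, HasDerivAt (fun t : ℝ => F (p + t • w)) (L w) 0 := by
    intro w
    have h1 : HasDerivAt (fun t : ℝ => p + t • w) w 0 := by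
      simpa using ((hasDerivAt_id (0:ℝ)).smul_const w).const_add p
    have hd' : HasFDerivAt F L (p + (0:ℝ) • w) := by simpa using hd
    exact hd'.comp_hasDerivAt (0:ℝ) h1
  have hrow : ∀ (x0 : X) (v : Y → ℝ), L (Pi.single x0 v) = 0 := by
    intro x0 v
    refine IsLocalMin.hasDerivAt_eq_zero ?_ (hline (Pi.single x0 v))
    have hnn : ∀ᶠ t : ℝ in 𝓝 0, p + t • (Pi.single x0 v : X → Y → ℝ) ∈ NN X Y := by
      have : ∀ᶠ t : ℝ in 𝓝 0, ∀ x y, 0 < (p + t • (Pi.single x0 v : X → Y → ℝ)) x y := by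
        rw [eventually_all]; intro x
        rw [eventually_all]; intro y
        have hc : Continuous fun t : ℝ => (p + t • (Pi.single x0 v : X → Y → ℝ)) x y := by
          simp only [Pi.add_apply, Pi.smul_apply]
          fun_prop
        refine hc.continuousAt.eventually_mem (s := Set.Ioi 0) (Ioi_mem_nhds ?_)
        simpa using hpos x y
      filter_upwards [this] with t ht x y using (ht x y).le
    filter_upwards [hnn] with t ht
    have := H x0 _ ht (fun x hx => by funext y; simp [Pi.single_eq_of_ne hx])
    simpa using this
  have hzero : L (q - p) = 0 := by
    rw [← Finset.univ_sum_single (q - p), map_sum]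
    exact Finset.sum_eq_zero fun x _ => hrow x _
  have hder := hline (q - p)
  rw [hzero] at hder
  have hsl := (hasDerivAt_iff_tendsto_slope.1 hder).mono_left
    (nhdsWithin_mono 0 (show Set.Ioi (0:ℝ) ⊆ {0}ᶜ from fun t ht => ne_of_gt ht))
  have hle : ∀ᶠ t : ℝ in 𝓝[>] 0, slope (fun t : ℝ => F (p + t • (q - p))) 0 t ≤ F q - F p := by
    have h1 : ∀ᶠ t : ℝ in 𝓝[>] 0, t < 1 := mem_nhdsWithin_of_mem_nhds (Iio_mem_nhds one_pos)
    filter_upwards [h1, self_mem_nhdsWithin] with t ht1 ht0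
    have ht0 : 0 < t := ht0
    have hc := hsc.2 hp hq (show 0 ≤ 1 - t by linarith) ht0.le (by ring)
    have e : (1 - t) • p + t • q = p + t • (q - p) := by
      rw [sub_smul, smul_sub, one_smul]; abel
    rw [e] at hc
    simp only [smul_eq_mul] at hc
    rw [slope_def_field]
    simp only [zero_smul, add_zero, sub_zero]
    rw [div_le_iff₀ ht0]
    linarith
  have := le_of_tendsto hsl hle
  linarith

lemma strict_unique {X Y : Type*} {F : (X → Y → ℝ) → ℝ} (hF : StrictConvexOn ℝ (NN X Y) F)
    {p q : X → Y → ℝ} (hp : p ∈ NN X Y) (hq : q ∈ NN X Y)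
    (hpm : F p ≤ F ((1/2 : ℝ) • p + (1/2 : ℝ) • q))
    (hqm : F q ≤ F ((1/2 : ℝ) • p + (1/2 : ℝ) • q)) : p = q := by
  by_contra hne
  have := hF.2 hp hq hne (show (0:ℝ) < 1/2 by norm_num) (show (0:ℝ) < 1/2 by norm_num) (by norm_num)
  simp only [smul_eq_mul] at this
  linarith

lemma sum_cellRestr {X Y : Type*} {n : ℕ} {Js : Fin n → Set X} (hJ : IsFinPartition Js)
    (p : X → Y → ℝ) (x : X) (y : Y) : ∑ i, cellRestr (Js i) p x y = p x y := by
  obtain ⟨-, hc, hd⟩ := hJ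
  have hx : x ∈ ⋃ i, Js i := hc ▸ Set.mem_univ x
  obtain ⟨i, hi⟩ := Set.mem_iUnion.1 hx
  rw [Finset.sum_eq_single i]
  · simp [cellRestr, hi]
  · intro j _ hj
    have : x ∉ Js j := fun h => Set.disjoint_left.1 (hd j i hj) h hi
    simp [cellRestr, this]
  · simp

lemma parUpdate_fixed {X Y : Type*} {n : ℕ} {Js : Fin n → Set X} (hJ : IsFinPartition Js)
    {S : Fin n → (X → Y → ℝ) → (X → Y → ℝ)}
    (Θ : (Fin n → X → Y → ℝ) → (Fin n → X → Y → ℝ) → Fin n → ℝ) {p : X → Y → ℝ}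
    (h : ∀ i, S i p = cellRestr (Js i) p) : parUpdate Js S Θ p = p := by
  funext x y
  unfold parUpdate combPlan
  rw [← sum_cellRestr hJ p x y]
  refine Finset.sum_congr rfl fun i _ => ?_
  simp only [h]
  rw [← add_mul]; simp

lemma parUpdate_NN {X Y : Type*} {n : ℕ} {Js : Fin n → Set X}
    {S : Fin n → (X → Y → ℝ) → (X → Y → ℝ)}
    {Θ : (Fin n → X → Y → ℝ) → (Fin n → X → Y → ℝ) → Fin n → ℝ}
    (hΘ : ∀ πJ tπ i, Θ πJ tπ i ∈ Set.Icc (0 : ℝ) 1)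
    {p : X → Y → ℝ} (hp : p ∈ NN X Y) (hS : ∀ i, S i p ∈ NN X Y) :
    parUpdate Js S Θ p ∈ NN X Y := by
  intro x y
  unfold parUpdate combPlan
  refine Finset.sum_nonneg fun i _ => ?_
  have h := hΘ (fun i => cellRestr (Js i) p) (fun i => S i p) i
  exact add_nonneg (mul_nonneg (sub_nonneg.2 h.2) (Set.indicator_nonneg (fun x' _ => hp x' y) x))
    (mul_nonneg h.1 (hS i x y))

lemma sublevel_compact {X Y : Type*} [Fintype X] [Fintype Y] {F : (X → Y → ℝ) → ℝ}
    (hF : ContinuousOn F (NN X Y)) {C : ℝ} (hC : ∀ p ∈ NN X Y, ∀ x y, p x y ≤ F p + C) (M : ℝ) :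
    IsCompact {p | p ∈ NN X Y ∧ F p ≤ M} := by
  have hcl : IsClosed (NN X Y) := by
    have : NN X Y = Set.Ici 0 := by
      ext p; simp [NN, Pi.le_def]
    rw [this]; exact isClosed_Ici
  have h2 : IsClosed (NN X Y ∩ F ⁻¹' Set.Iic M) :=
    hF.preimage_isClosed_of_isClosed hcl isClosed_Iic
  refine IsCompact.of_isClosed_subset
    (isCompact_Icc (a := (0 : X → Y → ℝ)) (b := fun _ _ => M + C)) h2 ?_
  intro p hp
  refine ⟨fun x y => hp.1 x y, fun x y => ?_⟩
  have := hC p hp.1 x y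
  have h3 : F p ≤ M := hp.2
  show p x y ≤ M + C
  linarith

lemma cont_upd {X Y : Type*} (J : Set X) :
    Continuous fun z : (X → Y → ℝ) × (X → Y → ℝ) => upd J z.1 z.2 := by
  refine continuous_pi fun x => ?_
  unfold upd
  by_cases hx : x ∈ J
  · simp only [hx, if_true]; fun_prop
  · simp only [hx, if_false]; fun_prop

lemma cont_cellRestr {X Y : Type*} (J : Set X) :
    Continuous fun z : X → Y → ℝ => cellRestr J z := by
  refine continuous_pi fun x => continuous_pi fun y => ?_
  unfold cellRestr
  by_cases hx : x ∈ J
  · simp only [Set.indicator_of_mem hx]; fun_prop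
  · simp only [Set.indicator_of_notMem hx]; fun_prop

lemma cont_comb {X Y : Type*} {n : ℕ}
    {Θ : (Fin n → X → Y → ℝ) → (Fin n → X → Y → ℝ) → Fin n → ℝ}
    (hΘ : Continuous fun p : (Fin n → X → Y → ℝ) × (Fin n → X → Y → ℝ) => Θ p.1 p.2) :
    Continuous fun z : (Fin n → X → Y → ℝ) × (Fin n → X → Y → ℝ) =>
      combPlan z.1 z.2 (Θ z.1 z.2) := by
  unfold combPlan
  refine continuous_pi fun x => continuous_pi fun y => continuous_finsetSum _ fun i _ => ?_
  have h1 : Continuous fun p : (Fin n → X → Y → ℝ) × (Fin n → X → Y → ℝ) =>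
    Θ p.1 p.2 i := (continuous_apply i).comp hΘ
  have h2 : Continuous fun p : (Fin n → X → Y → ℝ) × (Fin n → X → Y → ℝ) => p.1 i x y := by
    fun_prop
  have h3 : Continuous fun p : (Fin n → X → Y → ℝ) × (Fin n → X → Y → ℝ) => p.2 i x y := by
    fun_prop
  exact ((continuous_const.sub h1).mul h2).add (h1.mul h3)

lemma extract {X Y : Type*} [Fintype X] [Fintype Y] {F : (X → Y → ℝ) → ℝ}
    (hF : ContinuousOn F (NN X Y)) {C : ℝ} (hC : ∀ p ∈ NN X Y, ∀ x y, p x y ≤ F p + C) {M : ℝ}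
    (hsc : StrictConvexOn ℝ (NN X Y) F)
    {n : ℕ} {Js : Fin n → Set X} {S : Fin n → (X → Y → ℝ) → (X → Y → ℝ)}
    (hSN : ∀ i, ∀ p ∈ NN X Y, S i p ∈ NN X Y)
    (hS0 : ∀ i, ∀ p ∈ NN X Y, ∀ x ∉ Js i, S i p x = 0)
    (hSm : ∀ i, ∀ p ∈ NN X Y, ∀ q ∈ NN X Y, (∀ x ∉ Js i, q x = p x) →
      F (upd (Js i) (S i p) p) ≤ F q)
    {Θ : (Fin n → X → Y → ℝ) → (Fin n → X → Y → ℝ) → Fin n → ℝ}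
    (hΘ : Continuous fun p : (Fin n → X → Y → ℝ) × (Fin n → X → Y → ℝ) => Θ p.1 p.2)
    (u : ℕ → X → Y → ℝ) (hu : ∀ k, u k ∈ NN X Y) (huM : ∀ k, F (u k) ≤ M) :
    ∃ p ∈ NN X Y, ∃ g : ℕ → ℕ, StrictMono g ∧ Tendsto (u ∘ g) atTop (𝓝 p) ∧
      Tendsto (fun k => parUpdate Js S Θ (u (g k))) atTop (𝓝 (parUpdate Js S Θ p)) := by
  set K : Set (X → Y → ℝ) := {p | p ∈ NN X Y ∧ F p ≤ M} with hK
  have hKc : IsCompact K := sublevel_compact hF hC M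
  have hprod : IsCompact (K ×ˢ (Set.univ.pi fun _ : Fin n => K)) :=
    hKc.prod (isCompact_univ_pi fun _ => hKc)
  set U : Fin n → (X → Y → ℝ) → (X → Y → ℝ) := fun i p => upd (Js i) (S i p) p with hU
  have hUN : ∀ i, ∀ p ∈ NN X Y, U i p ∈ NN X Y := fun i p hp => upd_NN _ (hSN i p hp) hp
  have hmem : ∀ k, (u k, fun i => U i (u k)) ∈ K ×ˢ (Set.univ.pi fun _ : Fin n => K) := by
    intro k
    refine ⟨⟨hu k, huM k⟩, fun i _ => ⟨hUN i _ (hu k), ?_⟩⟩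
    exact (hSm i _ (hu k) _ (hu k) fun _ _ => rfl).trans (huM k)
  obtain ⟨⟨p, v⟩, ⟨hpK, hvK⟩, g, hg, hlim⟩ := hprod.tendsto_subseq hmem
  have hlim1 : Tendsto (u ∘ g) atTop (𝓝 p) := (continuous_fst.tendsto _).comp hlim
  have hlim2 : ∀ i, Tendsto (fun k => U i (u (g k))) atTop (𝓝 (v i)) := fun i =>
    (((continuous_apply i).comp continuous_snd).tendsto _).comp hlim
  have hp : p ∈ NN X Y := hpK.1
  have hFlim : ∀ {w : ℕ → X → Y → ℝ} {a : X → Y → ℝ}, a ∈ NN X Y → (∀ k, w k ∈ NN X Y) →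
      Tendsto w atTop (𝓝 a) → Tendsto (fun k => F (w k)) atTop (𝓝 (F a)) := by
    intro w a ha hw hwa
    exact (hF a ha).tendsto.comp
      (tendsto_nhdsWithin_iff.2 ⟨hwa, Eventually.of_forall hw⟩)
  have hv : ∀ i, v i = U i p := by
    intro i
    have hvN : v i ∈ NN X Y := (hvK i (Set.mem_univ i)).1
    have hvout : ∀ x ∉ Js i, v i x = p x := by
      intro x hx
      have h1 : Tendsto (fun k => U i (u (g k)) x) atTop (𝓝 (v i x)) :=
        ((continuous_apply x).tendsto _).comp (hlim2 i)
      have h2 : Tendsto (fun k => u (g k) x) atTop (𝓝 (p x)) :=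
        ((continuous_apply x).tendsto _).comp hlim1
      have h3 : (fun k => U i (u (g k)) x) = fun k => u (g k) x := by
        funext k; simp [hU, upd, hx]
      rw [h3] at h1
      exact tendsto_nhds_unique h1 h2
    have hvmin : ∀ q ∈ NN X Y, (∀ x ∉ Js i, q x = p x) → F (v i) ≤ F q := by
      intro q hq hqp
      have h1 := hFlim hvN (fun k => hUN i _ (hu (g k))) (hlim2 i)
      have h2 : Tendsto (fun k => upd (Js i) q (u (g k))) atTop (𝓝 q) := by
        have := ((cont_upd (Js i)).tendsto (q, p)).comp (tendsto_const_nhds.prodMk_nhds hlim1)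
        have e : upd (Js i) q p = q := by
          funext x
          unfold upd
          split_ifs with h
          · rfl
          · exact (hqp x h).symm
        simp only [e] at this
        exact this
      have h3 := hFlim hq (fun k => upd_NN (Js i) hq (hu (g k))) h2
      refine le_of_tendsto_of_tendsto' h1 h3 fun k => ?_
      exact hSm i _ (hu _) _ (upd_NN _ hq (hu _)) fun x hx => by simp [upd, hx]
    have hUout : ∀ x ∉ Js i, U i p x = p x := fun x hx => by simp [hU, upd, hx]
    have hmidN : (1/2 : ℝ) • v i + (1/2 : ℝ) • U i p ∈ NN X Y :=
      NN_convex X Y hvN (hUN i p hp) (by norm_num) (by norm_num) (by norm_num)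
    have hmid : ∀ x ∉ Js i, ((1/2 : ℝ) • v i + (1/2 : ℝ) • U i p) x = p x := by
      intro x hx
      simp only [Pi.add_apply, Pi.smul_apply, hvout x hx, hUout x hx]
      rw [← add_smul]; norm_num
    exact strict_unique hsc hvN (hUN i p hp) (hvmin _ hmidN hmid) (hSm i p hp _ hmidN hmid)
  have hSU : ∀ i, ∀ q ∈ NN X Y, S i q = cellRestr (Js i) (U i q) := by
    intro i q hq
    funext x y
    by_cases hx : x ∈ Js i
    · simp [cellRestr, hU, upd, hx]
    · simp [cellRestr, hx, hS0 i q hq x hx]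
  have hSlim : Tendsto (fun k => fun i => S i (u (g k))) atTop (𝓝 (fun i => S i p)) := by
    refine tendsto_pi_nhds.2 fun i => ?_
    have := ((cont_cellRestr (Js i)).tendsto _).comp (hlim2 i)
    rw [hv i, ← hSU i p hp] at this
    refine this.congr fun k => ?_
    exact (hSU i _ (hu _)).symm
  have hRlim : Tendsto (fun k => fun i => cellRestr (Js i) (u (g k))) atTop
      (𝓝 (fun i => cellRestr (Js i) p)) :=
    tendsto_pi_nhds.2 fun i => ((cont_cellRestr (Js i)).tendsto _).comp hlim1
  refine ⟨p, hp, g, hg, hlim1, ?_⟩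
  have h := ((cont_comb hΘ).tendsto (fun i => cellRestr (Js i) p, fun i => S i p)).comp
    (hRlim.prodMk_nhds hSlim)
  exact h

/-- if `Θ₀` is a continuous weight rule that strictly decreases the
score on every non-fixed point, and `Θ` is any weight rule performing at least as
well as `Θ₀` on every plan, then the parallel domain decomposition iterates with
rule `Θ` converge pointwise to the unique global minimizer of `E`. -/
theorem parallel_domdec_converges_comparison_rule
    {X Y : Type*} [Fintype X] [Fintype Y] [Nonempty X] [Nonempty Y]
    (μ : X → ℝ) (ν : Y → ℝ) (hμ : ∀ x, 0 < μ x) (hν : ∀ y, 0 < ν y)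
    (c : X → Y → ℝ) (ε : ℝ) (hε : 0 < ε)
    (φ₁ φ₂ : ℝ → EReal) (h₁ : AssumptionA φ₁) (h₂ : AssumptionA φ₂)
    {nA nB : ℕ} (JA : Fin nA → Set X) (JB : Fin nB → Set X)
    (hJA : IsFinPartition JA) (hJB : IsFinPartition JB)
    (SA : Fin nA → (X → Y → ℝ) → (X → Y → ℝ))
    (SB : Fin nB → (X → Y → ℝ) → (X → Y → ℝ))
    (hSA : IsSolveMap c ε φ₁ φ₂ μ ν JA SA)
    (hSB : IsSolveMap c ε φ₁ φ₂ μ ν JB SB)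
    -- the reference weight rules Θ₀
    (Θ0A : (Fin nA → X → Y → ℝ) → (Fin nA → X → Y → ℝ) → Fin nA → ℝ)
    (Θ0B : (Fin nB → X → Y → ℝ) → (Fin nB → X → Y → ℝ) → Fin nB → ℝ)
    (hΘ0A01 : ∀ πJ tπ i, Θ0A πJ tπ i ∈ Set.Icc (0 : ℝ) 1)
    (hΘ0B01 : ∀ πJ tπ i, Θ0B πJ tπ i ∈ Set.Icc (0 : ℝ) 1)
    (hΘ0Acont : Continuous fun p : (Fin nA → X → Y → ℝ) × (Fin nA → X → Y → ℝ) =>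
      Θ0A p.1 p.2)
    (hΘ0Bcont : Continuous fun p : (Fin nB → X → Y → ℝ) × (Fin nB → X → Y → ℝ) =>
      Θ0B p.1 p.2)
    (hΘ0Adec : ∀ π : X → Y → ℝ, (∀ x y, 0 ≤ π x y) →
      Eglobal c ε φ₁ φ₂ μ ν π ≠ ⊤ →
      (∃ i, SA i π ≠ cellRestr (JA i) π) →
      Eglobal c ε φ₁ φ₂ μ ν (parUpdate JA SA Θ0A π) < Eglobal c ε φ₁ φ₂ μ ν π)
    (hΘ0Bdec : ∀ π : X → Y → ℝ, (∀ x y, 0 ≤ π x y) →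
      Eglobal c ε φ₁ φ₂ μ ν π ≠ ⊤ →
      (∃ i, SB i π ≠ cellRestr (JB i) π) →
      Eglobal c ε φ₁ φ₂ μ ν (parUpdate JB SB Θ0B π) < Eglobal c ε φ₁ φ₂ μ ν π)
    -- the weight rules Θ, performing at least as well as Θ₀
    (ΘA : (Fin nA → X → Y → ℝ) → (Fin nA → X → Y → ℝ) → Fin nA → ℝ)
    (ΘB : (Fin nB → X → Y → ℝ) → (Fin nB → X → Y → ℝ) → Fin nB → ℝ)
    (hΘA01 : ∀ πJ tπ i, ΘA πJ tπ i ∈ Set.Icc (0 : ℝ) 1)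
    (hΘB01 : ∀ πJ tπ i, ΘB πJ tπ i ∈ Set.Icc (0 : ℝ) 1)
    (hcompA : ∀ π : X → Y → ℝ, (∀ x y, 0 ≤ π x y) →
      Eglobal c ε φ₁ φ₂ μ ν π ≠ ⊤ →
      Eglobal c ε φ₁ φ₂ μ ν (parUpdate JA SA ΘA π)
        ≤ Eglobal c ε φ₁ φ₂ μ ν (parUpdate JA SA Θ0A π))
    (hcompB : ∀ π : X → Y → ℝ, (∀ x y, 0 ≤ π x y) →
      Eglobal c ε φ₁ φ₂ μ ν π ≠ ⊤ →
      Eglobal c ε φ₁ φ₂ μ ν (parUpdate JB SB ΘB π)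
        ≤ Eglobal c ε φ₁ φ₂ μ ν (parUpdate JB SB Θ0B π))
    (π0 : X → Y → ℝ) (hπ0 : ∀ x y, 0 ≤ π0 x y)
    (hfin : Eglobal c ε φ₁ φ₂ μ ν π0 ≠ ⊤)
    (iter : ℕ → X → Y → ℝ) (hiter0 : iter 0 = π0)
    (hiterS : ∀ k : ℕ, iter (k + 1) =
      if (k + 1) % 2 = 1 then parUpdate JA SA ΘA (iter k)
      else parUpdate JB SB ΘB (iter k)) :
    ∃ πopt : X → Y → ℝ, (∀ x y, 0 ≤ πopt x y) ∧
      (∀ π' : X → Y → ℝ, (∀ x y, 0 ≤ π' x y) →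
          Eglobal c ε φ₁ φ₂ μ ν πopt ≤ Eglobal c ε φ₁ φ₂ μ ν π') ∧
      (∀ π' : X → Y → ℝ, (∀ x y, 0 ≤ π' x y) →
          (∀ π'' : X → Y → ℝ, (∀ x y, 0 ≤ π'' x y) →
            Eglobal c ε φ₁ φ₂ μ ν π' ≤ Eglobal c ε φ₁ φ₂ μ ν π'') →
          π' = πopt) ∧
      ∀ x y, Filter.Tendsto (fun k => iter k x y) Filter.atTop (nhds (πopt x y)) := by
  classical
  set f₁ : ℝ → ℝ := fun s => (φ₁ s).toReal with hf₁
  set f₂ : ℝ → ℝ := fun s => (φ₂ s).toReal with hf₂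
  have r₁ : RA f₁ := RA_of_A h₁
  have r₂ : RA f₂ := RA_of_A h₂
  set F : (X → Y → ℝ) → ℝ := FJ c ε f₁ f₂ μ ν (fun _ => 0) with hFdef
  have hE : ∀ p ∈ NN X Y, Eglobal c ε φ₁ φ₂ μ ν p = ((F p : ℝ) : EReal) := fun p hp =>
    EJ_eq c ε h₁ h₂ hμ hν (fun _ => le_rfl) hp
  have hfinE : ∀ p ∈ NN X Y, Eglobal c ε φ₁ φ₂ μ ν p ≠ ⊤ := fun p hp => by
    rw [hE p hp]; exact EReal.coe_ne_top _
  have hFc : ContinuousOn F (NN X Y) := FJ_contOn c ε r₁ r₂ hμ hν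
  have hsc : StrictConvexOn ℝ (NN X Y) F := FJ_strict c hε r₁ r₂ hμ hν
  obtain ⟨C, hC⟩ := FJ_coercive c hε r₁ r₂ hμ hν
  have hSAN : ∀ i, ∀ p ∈ NN X Y, SA i p ∈ NN X Y := fun i p hp => (hSA i p hp).1
  have hSBN : ∀ i, ∀ p ∈ NN X Y, SB i p ∈ NN X Y := fun i p hp => (hSB i p hp).1
  have hSA0 : ∀ i, ∀ p ∈ NN X Y, ∀ x ∉ JA i, SA i p x = 0 := fun i p hp x hx =>
    funext fun y => (hSA i p hp).2.1 x hx y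
  have hSAm : ∀ i, ∀ p ∈ NN X Y, ∀ q ∈ NN X Y, (∀ x ∉ JA i, q x = p x) →
      F (upd (JA i) (SA i p) p) ≤ F q := fun i p hp q hq h =>
    solve_min h₁ h₂ hμ hν hSA i hp hq h
  -- one-step comparison
  have hA0N : ∀ p ∈ NN X Y, parUpdate JA SA Θ0A p ∈ NN X Y := fun p hp =>
    parUpdate_NN hΘ0A01 hp fun i => hSAN i p hp
  have hB0N : ∀ p ∈ NN X Y, parUpdate JB SB Θ0B p ∈ NN X Y := fun p hp =>
    parUpdate_NN hΘ0B01 hp fun i => hSBN i p hp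
  have hAN : ∀ p ∈ NN X Y, parUpdate JA SA ΘA p ∈ NN X Y := fun p hp =>
    parUpdate_NN hΘA01 hp fun i => hSAN i p hp
  have hBN : ∀ p ∈ NN X Y, parUpdate JB SB ΘB p ∈ NN X Y := fun p hp =>
    parUpdate_NN hΘB01 hp fun i => hSBN i p hp
  have hAc : ∀ p ∈ NN X Y, F (parUpdate JA SA ΘA p) ≤ F (parUpdate JA SA Θ0A p) := by
    intro p hp
    have := hcompA p hp (hfinE p hp)
    rw [hE _ (hAN p hp), hE _ (hA0N p hp)] at this
    exact EReal.coe_le_coe_iff.1 this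
  have hBc : ∀ p ∈ NN X Y, F (parUpdate JB SB ΘB p) ≤ F (parUpdate JB SB Θ0B p) := by
    intro p hp
    have := hcompB p hp (hfinE p hp)
    rw [hE _ (hBN p hp), hE _ (hB0N p hp)] at this
    exact EReal.coe_le_coe_iff.1 this
  have hAd : ∀ p ∈ NN X Y, (∃ i, SA i p ≠ cellRestr (JA i) p) →
      F (parUpdate JA SA Θ0A p) < F p := by
    intro p hp hne
    have := hΘ0Adec p hp (hfinE p hp) hne
    rw [hE _ (hA0N p hp), hE _ hp] at this
    exact EReal.coe_lt_coe_iff.1 this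
  have hBd : ∀ p ∈ NN X Y, (∃ i, SB i p ≠ cellRestr (JB i) p) →
      F (parUpdate JB SB Θ0B p) < F p := by
    intro p hp hne
    have := hΘ0Bdec p hp (hfinE p hp) hne
    rw [hE _ (hB0N p hp), hE _ hp] at this
    exact EReal.coe_lt_coe_iff.1 this
  have hAle : ∀ p ∈ NN X Y, F (parUpdate JA SA ΘA p) ≤ F p := by
    intro p hp
    by_cases hne : ∃ i, SA i p ≠ cellRestr (JA i) p
    · exact (hAc p hp).trans (hAd p hp hne).le
    · push Not at hne
      rw [parUpdate_fixed hJA _ hne]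
  have hBle : ∀ p ∈ NN X Y, F (parUpdate JB SB ΘB p) ≤ F p := by
    intro p hp
    by_cases hne : ∃ i, SB i p ≠ cellRestr (JB i) p
    · exact (hBc p hp).trans (hBd p hp hne).le
    · push Not at hne
      rw [parUpdate_fixed hJB _ hne]
  -- the iterates
  have hitN : ∀ k, iter k ∈ NN X Y := by
    intro k
    induction k with
    | zero => rw [hiter0]; exact hπ0
    | succ k ih =>
      rw [hiterS k]
      split_ifs
      · exact hAN _ ih
      · exact hBN _ ih
  have hanti : Antitone fun k => F (iter k) := by
    refine antitone_nat_of_succ_le fun k => ?_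
    rw [hiterS k]
    split_ifs
    · exact hAle _ (hitN k)
    · exact hBle _ (hitN k)
  have hFlim : ∀ {w : ℕ → X → Y → ℝ} {a : X → Y → ℝ}, a ∈ NN X Y → (∀ k, w k ∈ NN X Y) →
      Tendsto w atTop (𝓝 a) → Tendsto (fun k => F (w k)) atTop (𝓝 (F a)) := by
    intro w a ha hw hwa
    exact (hFc a ha).tendsto.comp
      (tendsto_nhdsWithin_iff.2 ⟨hwa, Eventually.of_forall hw⟩)
  have hM : ∀ k, F (iter k) ≤ F (iter 0) := fun k => hanti (Nat.zero_le k)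
  obtain ⟨p, hp, g, hg, hlim, hlimT⟩ := extract hFc hC hsc hSAN hSA0 hSAm hΘ0Acont
    (fun k => iter (2 * k)) (fun k => hitN _) (fun k => hM _)
  have hbdd : BddBelow (Set.range fun k => F (iter k)) := by
    refine ⟨-C, ?_⟩
    rintro _ ⟨k, rfl⟩
    obtain ⟨x0⟩ := ‹Nonempty X›
    obtain ⟨y0⟩ := ‹Nonempty Y›
    have h1 := hC _ (hitN k) x0 y0
    have h2 := hitN k x0 y0
    show -C ≤ F (iter k)
    linarith
  have hL := tendsto_atTop_ciInf hanti hbdd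
  set L := ⨅ k, F (iter k) with hLdef
  have hsub : Tendsto (fun k => 2 * g k) atTop atTop :=
    tendsto_atTop_mono (fun k => (hg.id_le k).trans (Nat.le_mul_of_pos_left _ two_pos)) tendsto_id
  have hFp : F p = L :=
    tendsto_nhds_unique (hFlim hp (fun k => hitN _) hlim) (hL.comp hsub)
  have hTp : L ≤ F (parUpdate JA SA Θ0A p) := by
    have h1 := hFlim (hA0N p hp) (fun k => hA0N _ (hitN (2 * g k))) hlimT
    refine ge_of_tendsto' h1 fun k => ?_
    refine (ciInf_le hbdd (2 * g k + 1)).trans ?_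
    rw [hiterS, if_pos (by omega)]
    exact hAc _ (hitN _)
  have hfix : ∀ i, SA i p = cellRestr (JA i) p := by
    by_contra hne
    push Not at hne
    have := hAd p hp hne
    linarith
  have hpmin : ∀ q ∈ NN X Y, F p ≤ F q := by
    intro q hq
    refine row_min_global c hε r₁ r₂ hμ hν hp ?_ hq
    intro x0 q hq hqp
    have hx : x0 ∈ ⋃ i, JA i := hJA.2.1 ▸ Set.mem_univ x0
    obtain ⟨i, hi⟩ := Set.mem_iUnion.1 hx
    have h1 := hSAm i p hp q hq fun x hx => hqp x fun h => hx (h ▸ hi)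
    have e : upd (JA i) (SA i p) p = p := by
      funext x y
      rw [hfix i]
      by_cases h : x ∈ JA i <;> simp [upd, cellRestr, h]
    rwa [e] at h1
  have huniq : ∀ q ∈ NN X Y, F q ≤ F p → q = p := by
    intro q hq hqp
    have hmid : (1/2 : ℝ) • q + (1/2 : ℝ) • p ∈ NN X Y :=
      NN_convex X Y hq hp (by norm_num) (by norm_num) (by norm_num)
    exact strict_unique hsc hq hp (hqp.trans (hpmin _ hmid)) (hpmin _ hmid)
  refine ⟨p, hp, ?_, ?_, ?_⟩
  · intro q hq
    rw [hE p hp, hE q hq]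
    exact EReal.coe_le_coe_iff.2 (hpmin q hq)
  · intro q hq hqm
    have := hqm p hp
    rw [hE p hp, hE q hq] at this
    exact huniq q hq (EReal.coe_le_coe_iff.1 this)
  · have hconv : Tendsto iter atTop (𝓝 p) := by
      refine tendsto_of_subseq_tendsto fun ns hns => ?_
      obtain ⟨q, hqK, ms, hms, hq⟩ := (sublevel_compact hFc hC (F (iter 0))).tendsto_subseq
        (x := fun k => iter (ns k)) (fun k => ⟨hitN _, hM _⟩)
      have h1 := hFlim hqK.1 (fun k => hitN _) hq
      have h2 := hL.comp (hns.comp hms.tendsto_atTop)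
      have h3 : F q = L := tendsto_nhds_unique h1 h2
      have h4 := huniq q hqK.1 (by rw [h3, hFp])
      exact ⟨ms, h4 ▸ hq⟩
    intro x y
    exact ((continuous_apply_apply x y).tendsto p).comp hconv

end
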